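/- Let n ≥ 1 and let S, T, U ⊆ {1,…,n−1}. Then the unique coefficients N in the expansions d_A·d_B = ∑_W N_{A,B}^W d_W (over subsets W of {1,…,n}) satisfy: (a) N_{S,T}^{{n}∪U} = N_{{n}∪S,T}^{U} = N_{S,{n}∪T}^{U} = N_{{n}∪S,{n}∪T}^{{n}∪U} = 0; (b) N_{{n}∪S,T}^{{n}∪U} = N_{S,{n}∪T}^{{n}∪U} = N_{S,T}^{U}; (c) if U ≠ ∅ then N_{{n}∪S,{n}∪T}^{U} = N_{S,T}^{{1+max U,…,n−1} ∪ (U∖{max U})} + 2·∑_{k=max U}^{n−1} N_{S,T}^{{k+1,…,n−1} ∪ U}; and (d) N_{{n}∪S,{n}∪T}^{∅} = 2·∑_{k=0}^{n−1} N_{S,T}^{{k+1,…,n−1}}. -/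

import Mathlib

open Real

/-- `c j = 2·cos(π/2^(j+1))` (so `c 0 = 0`). -/
noncomputable def c (j : ℕ) : ℝ := 2 * Real.cos (π / 2 ^ (j + 1))

/-- `d S = ∏_{j ∈ S} c j` (so `d ∅ = 1`). -/
noncomputable def d (S : Finset ℕ) : ℝ := ∏ j ∈ S, c j

/-!
For `j ≤ m`, `c j` is the value at `c m` of the rescaled Chebyshev polynomial of degree
`2 ^ (m - j)`, and the one of degree `2 ^ m` is Eisenstein at `2` with root `c m`. So the ring
`ℚ[c m]` has dimension `2 ^ m` and contains every `d W` with `W ⊆ {1,…,m}`. The half-angle formula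
gives `c (m + 1) ^ 2 = 2 + c m`, and the closed formula for multiplication by
this number shows that the span of these `d W` is stable under multiplication by `c m`, hence is
all of `ℚ[c m]`, so the `2 ^ m` numbers `d W` form a basis. In particular `d S * d T` has no
component involving `c (m + 1)`, and its products with `c (m + 1)` and `c (m + 1) ^ 2` are read off
by uniqueness of coefficients.
-/

lemma adjoin_singleton_le_of_mul_mem {R A : Type*} [CommSemiring R] [Semiring A] [Algebra R A]
    {x : A} {V : Submodule R A} (one_mem : 1 ∈ V) (mul_mem : ∀ v ∈ V, x * v ∈ V) :
    Subalgebra.toSubmodule (Algebra.adjoin R {x}) ≤ V := by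
  rw [Algebra.adjoin_toSubmodule_le]
  intro y hy
  obtain ⟨k, rfl⟩ := Submonoid.mem_closure_singleton.1 hy
  induction k with
  | zero => simpa using one_mem
  | succ k ih =>
    rw [pow_succ']
    exact mul_mem _ (ih (pow_mem Submonoid.mem_closure_singleton_self k))

section ChebyshevPolynomial

open Polynomial

variable (R : Type*) [CommRing R]

lemma chebyshevC_two_pow_succ (k : ℕ) :
    Chebyshev.C R (2 ^ (k + 1)) = Chebyshev.C R (2 ^ k) ^ 2 - 2 := by
  rw [pow_succ', Chebyshev.C_mul, Chebyshev.C_two]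
  simp

lemma isMonicOfDegree_chebyshevC [Nontrivial R] {n : ℕ} (hn : n ≠ 0) :
    IsMonicOfDegree (Chebyshev.C R n) n := by
  induction n using Nat.twoStepInduction with
  | zero => contradiction
  | one => simpa using isMonicOfDegree_X R
  | more n ih₀ ih₁ =>
    have hlt : (Chebyshev.C R n).natDegree < 1 + (n + 1) := by
      obtain rfl | hn₀ := eq_or_ne n 0
      · simp
      · rw [(ih₀ hn₀).natDegree_eq]
        omega
    rw [Nat.cast_add, Nat.cast_two, Chebyshev.C_add_two, ← Nat.cast_add_one,
      show n + 2 = 1 + (n + 1) by omega]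
    exact ((isMonicOfDegree_X R).mul (ih₁ n.succ_ne_zero)).sub hlt

lemma isMonicOfDegree_chebyshevC_two_pow [Nontrivial R] (k : ℕ) :
    IsMonicOfDegree (Chebyshev.C R (2 ^ k)) (2 ^ k) :=
  mod_cast isMonicOfDegree_chebyshevC R (Nat.two_pow_pos k).ne'

lemma chebyshevC_two_pow_of_charTwo [CharP R 2] (k : ℕ) :
    Chebyshev.C R (2 ^ k) = X ^ 2 ^ k := by
  induction k with
  | zero => simp
  | succ k ih =>
    rw [chebyshevC_two_pow_succ, ih, CharTwo.two_eq_zero (R := R[X]), sub_zero, ← pow_mul,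
      ← pow_succ]

lemma sq_eval_zero_chebyshevC_two_pow_succ (k : ℕ) :
    (Chebyshev.C R (2 ^ (k + 1))).eval 0 ^ 2 = 4 := by
  induction k with
  | zero => norm_num [Chebyshev.C_two]
  | succ k ih =>
    rw [chebyshevC_two_pow_succ, eval_sub, eval_pow, ih, eval_ofNat]
    norm_num

lemma two_dvd_coeff_chebyshevC_two_pow {k i : ℕ} (hi : i < 2 ^ k) :
    2 ∣ (Chebyshev.C ℤ (2 ^ k)).coeff i := by
  have hcoeff := congrArg (coeff · i) (chebyshevC_two_pow_of_charTwo (ZMod 2) k)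
  simp only [← Chebyshev.map_C (Int.castRingHom (ZMod 2)), coeff_map, coeff_X_pow, hi.ne,
    if_false] at hcoeff
  exact (ZMod.intCast_zmod_eq_zero_iff_dvd _ 2).1 hcoeff

lemma irreducible_chebyshevC_two_pow (k : ℕ) : Irreducible (Chebyshev.C ℤ (2 ^ k)) := by
  obtain _ | k := k
  · simpa using irreducible_X
  have hmonic := isMonicOfDegree_chebyshevC_two_pow ℤ (k + 1)
  have hprime : (Ideal.span {(2 : ℤ)}).IsPrime :=
    (Ideal.span_singleton_prime two_ne_zero).2 Int.prime_two
  refine (hmonic.monic.isEisensteinAt_of_mem_of_notMem hprime.ne_top (fun {i} hi => ?_)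
    fun h => ?_).irreducible hprime hmonic.monic.isPrimitive ?_
  · rw [hmonic.natDegree_eq] at hi
    exact Ideal.mem_span_singleton.2 (two_dvd_coeff_chebyshevC_two_pow hi)
  · rw [Ideal.span_singleton_pow, Ideal.mem_span_singleton, coeff_zero_eq_eval_zero] at h
    have hdvd := pow_dvd_pow_of_dvd h 2
    rw [sq_eval_zero_chebyshevC_two_pow_succ] at hdvd
    norm_num at hdvd
  · rw [hmonic.natDegree_eq]
    positivity

end ChebyshevPolynomial

section MinimalPolynomial

open Polynomial

lemma c_zero : c 0 = 0 := by simp [c]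

lemma c_succ_sq (j : ℕ) : c (j + 1) ^ 2 = 2 + c j := by
  have hangle : π / 2 ^ (j + 1) = 2 * (π / 2 ^ (j + 1 + 1)) := by
    field_simp
    ring
  rw [c, c, hangle, cos_two_mul]
  ring

lemma aeval_c_chebyshevC_two_pow (j k : ℕ) :
    aeval (c (j + k)) (Chebyshev.C ℚ (2 ^ k)) = c j := by
  rw [Chebyshev.aeval_C, c, Chebyshev.C_two_mul_real_cos, c]
  congr 2
  push_cast
  field_simp
  ring

lemma minpoly_c (n : ℕ) : minpoly ℚ (c n) = Chebyshev.C ℚ (2 ^ n) := by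
  have hirr := irreducible_chebyshevC_two_pow n
  rw [(isMonicOfDegree_chebyshevC_two_pow ℤ n).monic.irreducible_iff_irreducible_map_fraction_map
    (K := ℚ), Chebyshev.map_C] at hirr
  refine (minpoly.eq_of_irreducible_of_monic hirr ?_
    (isMonicOfDegree_chebyshevC_two_pow ℚ n).monic).symm
  simpa [c_zero] using aeval_c_chebyshevC_two_pow 0 n

lemma isIntegral_c (n : ℕ) : IsIntegral ℚ (c n) := by
  refine minpoly.ne_zero_iff.1 ?_
  rw [minpoly_c]
  exact (isMonicOfDegree_chebyshevC_two_pow ℚ n).ne_zero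

lemma finrank_adjoin_c (n : ℕ) : Module.finrank ℚ (Algebra.adjoin ℚ {c n}) = 2 ^ n := by
  rw [(Algebra.adjoin.powerBasis (isIntegral_c n)).finrank, Algebra.adjoin.powerBasis_dim,
    minpoly_c, (isMonicOfDegree_chebyshevC_two_pow ℚ n).natDegree_eq]

lemma d_mem_adjoin_c {n : ℕ} {A : Finset ℕ} (hA : A ⊆ Finset.Icc 1 n) :
    d A ∈ Algebra.adjoin ℚ {c n} := by
  refine Subalgebra.prod_mem _ fun j hj => ?_
  obtain ⟨k, rfl⟩ := Nat.exists_eq_add_of_le (Finset.mem_Icc.1 (hA hj)).2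
  rw [← aeval_c_chebyshevC_two_pow j k]
  exact aeval_mem_adjoin_singleton ℚ _

end MinimalPolynomial

section Subsets

variable {l m : ℕ} {W : Finset ℕ}

lemma succ_notMem_of_subset_Icc (hW : W ⊆ Finset.Icc l m) : m + 1 ∉ W := fun h =>
  m.not_succ_le_self (Finset.mem_Icc.1 (hW h)).2

lemma subset_Icc_succ (hW : W ⊆ Finset.Icc l m) : W ⊆ Finset.Icc l (m + 1) :=
  hW.trans (Finset.Icc_subset_Icc_right m.le_succ)

lemma insert_succ_subset_Icc_succ (hl : l ≤ m + 1) (hW : W ⊆ Finset.Icc l m) :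
    insert (m + 1) W ⊆ Finset.Icc l (m + 1) :=
  Finset.insert_subset (Finset.right_mem_Icc.2 hl) (subset_Icc_succ hW)

lemma sup_id_le_of_subset_Icc (hW : W ⊆ Finset.Icc l m) : W.sup id ≤ m :=
  Finset.sup_le fun _ hi => (Finset.mem_Icc.1 (hW hi)).2

lemma d_insert_succ (hW : W ⊆ Finset.Icc l m) : d (insert (m + 1) W) = c (m + 1) * d W :=
  Finset.prod_insert (succ_notMem_of_subset_Icc hW)

end Subsets

/-- The combination `∑ a W * d W` over `W ⊆ {1,…,m}`, as a linear function of its coefficients;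
the values of `a` at other sets are irrelevant. -/
noncomputable def expansion (m : ℕ) : (Finset ℕ → ℚ) →ₗ[ℚ] ℝ :=
  ∑ W ∈ (Finset.Icc 1 m).powerset, (LinearMap.proj W).smulRight (d W)

lemma expansion_apply (m : ℕ) (a : Finset ℕ → ℚ) :
    expansion m a = ∑ W ∈ (Finset.Icc 1 m).powerset, (a W : ℝ) * d W := by
  simp [expansion, Rat.smul_def]

lemma expansion_congr {m : ℕ} {a b : Finset ℕ → ℚ} (h : ∀ W ⊆ Finset.Icc 1 m, a W = b W) :
    expansion m a = expansion m b := by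
  simp only [expansion_apply]
  exact Finset.sum_congr rfl fun W hW => by rw [h W (Finset.mem_powerset.1 hW)]

lemma expansion_zero (a : Finset ℕ → ℚ) : expansion 0 a = a ∅ := by
  simp [expansion_apply, d]

lemma expansion_succ (m : ℕ) (a : Finset ℕ → ℚ) :
    expansion (m + 1) a =
      expansion m a + c (m + 1) * expansion m fun W => a (insert (m + 1) W) := by
  simp only [expansion_apply]
  rw [← Finset.insert_Icc_right_eq_Icc_add_one (by omega),
    Finset.sum_powerset_insert (by simp), Finset.mul_sum]
  congr 1
  refine Finset.sum_congr rfl fun W hW => ?_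
  rw [d_insert_succ (Finset.mem_powerset.1 hW)]
  ring

lemma expansion_single {m : ℕ} {W : Finset ℕ} (hW : W ⊆ Finset.Icc 1 m) :
    expansion m (Pi.single W 1) = d W := by
  rw [expansion_apply, Finset.sum_eq_single_of_mem W (Finset.mem_powerset.2 hW)
    fun V _ hV => by simp [Pi.single_eq_of_ne hV]]
  simp

/-- The coefficients of `c (m + 1) ^ 2 * expansion m a`, in closed form. The empty set, for which
`U.sup id = 0`, lacks the first term because `c 0 = 0`. -/
def sqMulCoeff (m : ℕ) (a : Finset ℕ → ℚ) (U : Finset ℕ) : ℚ :=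
  (if U.Nonempty then a (Finset.Icc (U.sup id + 1) m ∪ U.erase (U.sup id)) else 0) +
    2 * ∑ k ∈ Finset.Icc (U.sup id) m, a (Finset.Icc (k + 1) m ∪ U)

lemma sqMulCoeff_empty (m : ℕ) (a : Finset ℕ → ℚ) :
    sqMulCoeff m a ∅ = 2 * ∑ k ∈ Finset.range (m + 1), a (Finset.Icc (k + 1) m) := by
  simp [sqMulCoeff, Finset.range_eq_Ico, Finset.Ico_add_one_right_eq_Icc]

lemma sqMulCoeff_of_nonempty (m : ℕ) (a : Finset ℕ → ℚ) {U : Finset ℕ} (hU : U.Nonempty) :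
    sqMulCoeff m a U = a (Finset.Icc (U.max' hU + 1) m ∪ U.erase (U.max' hU)) +
      2 * ∑ k ∈ Finset.Icc (U.max' hU) m, a (Finset.Icc (k + 1) m ∪ U) := by
  rw [sqMulCoeff, if_pos hU, Finset.max'_eq_sup', Finset.sup'_eq_sup]

lemma sqMulCoeff_succ {m : ℕ} (a : Finset ℕ → ℚ) {U : Finset ℕ} (hU : U ⊆ Finset.Icc 1 m) :
    sqMulCoeff (m + 1) a U = 2 * a U + sqMulCoeff m (fun W => a (insert (m + 1) W)) U := by
  have hsup := sup_id_le_of_subset_Icc hU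
  have hIcc (V : Finset ℕ) {k : ℕ} (hk : k ≤ m) :
      Finset.Icc (k + 1) (m + 1) ∪ V = insert (m + 1) (Finset.Icc (k + 1) m ∪ V) := by
    rw [← Finset.insert_union, Finset.insert_Icc_right_eq_Icc_add_one (by omega)]
  rw [sqMulCoeff, sqMulCoeff, Finset.sum_Icc_succ_top (by omega), hIcc _ hsup,
    Finset.sum_congr rfl fun k hk => by rw [hIcc U (Finset.mem_Icc.1 hk).2],
    Finset.Icc_eq_empty_of_lt (Nat.lt_succ_self (m + 1)), Finset.empty_union]
  ring

lemma sqMulCoeff_succ_insert {m : ℕ} (a : Finset ℕ → ℚ) {U : Finset ℕ}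
    (hU : U ⊆ Finset.Icc 1 m) :
    sqMulCoeff (m + 1) a (insert (m + 1) U) = a U + 2 * a (insert (m + 1) U) := by
  have hsup : (insert (m + 1) U).sup id = m + 1 := by
    rw [Finset.sup_insert, id, sup_eq_left]
    exact (sup_id_le_of_subset_Icc hU).trans m.le_succ
  simp [sqMulCoeff, hsup, Finset.erase_insert (succ_notMem_of_subset_Icc hU)]

lemma expansion_sqMulCoeff (m : ℕ) (a : Finset ℕ → ℚ) :
    expansion m (sqMulCoeff m a) = c (m + 1) ^ 2 * expansion m a := by
  induction m generalizing a with
  | zero => simp [expansion_zero, c_succ_sq, c_zero, sqMulCoeff]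
  | succ m ih =>
    let a' : Finset ℕ → ℚ := fun W => a (insert (m + 1) W)
    calc expansion (m + 1) (sqMulCoeff (m + 1) a)
      _ = expansion m ((2 : ℚ) • a + sqMulCoeff m a') +
            c (m + 1) * expansion m (a + (2 : ℚ) • a') := by
        rw [expansion_succ]
        congr 1
        · exact expansion_congr fun U hU => sqMulCoeff_succ a hU
        · exact congrArg _ (expansion_congr fun U hU => sqMulCoeff_succ_insert a hU)
      _ = (2 + c (m + 1)) * (expansion m a + c (m + 1) * expansion m a') := by
        simp only [map_add, map_smul, Rat.smul_def, Rat.cast_ofNat, ih]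
        ring
      _ = c (m + 2) ^ 2 * expansion (m + 1) a := by rw [c_succ_sq, expansion_succ]

lemma adjoin_c_le_range_expansion (m : ℕ) :
    Subalgebra.toSubmodule (Algebra.adjoin ℚ {c m}) ≤ LinearMap.range (expansion m) := by
  refine adjoin_singleton_le_of_mul_mem
    ⟨Pi.single ∅ 1, (expansion_single (Finset.empty_subset _)).trans Finset.prod_empty⟩ ?_
  rintro _ ⟨a, rfl⟩
  refine ⟨sqMulCoeff m a - (2 : ℚ) • a, ?_⟩
  rw [map_sub, map_smul, expansion_sqMulCoeff, Rat.smul_def, Rat.cast_ofNat, c_succ_sq]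
  ring

lemma linearIndepOn_d (n : ℕ) :
    LinearIndepOn ℚ d ((Finset.Icc 1 n).powerset : Set (Finset ℕ)) := by
  refine linearIndependent_iff_card_le_finrank_span.2 ?_
  have hrange : LinearMap.range (expansion n) ≤
      Submodule.span ℚ (Set.range fun W : (Finset.Icc 1 n).powerset => d W) := by
    rintro _ ⟨a, rfl⟩
    rw [expansion_apply]
    refine Submodule.sum_mem _ fun W hW => ?_
    rw [← Rat.smul_def]
    exact Submodule.smul_mem _ _ (Submodule.subset_span ⟨⟨W, hW⟩, rfl⟩)
  have := FiniteDimensional.span_of_finite ℚ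
    (Set.finite_range fun W : (Finset.Icc 1 n).powerset => d W)
  calc Fintype.card (Finset.Icc 1 n).powerset
    _ = Module.finrank ℚ (Algebra.adjoin ℚ {c n}) := by simp [finrank_adjoin_c]
    _ ≤ Set.finrank ℚ (Set.range fun W : (Finset.Icc 1 n).powerset => d W) :=
      Submodule.finrank_mono ((adjoin_c_le_range_expansion n).trans hrange)

lemma coeff_eq_of_expansion_eq {n : ℕ} {a b : Finset ℕ → ℚ} (h : expansion n a = expansion n b)
    {W : Finset ℕ} (hW : W ⊆ Finset.Icc 1 n) : a W = b W := by
  simp only [expansion_apply, ← Rat.smul_def] at h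
  exact linearIndepOn_finset_iffₛ.1 (linearIndepOn_d n) a b h W (Finset.mem_powerset.2 hW)

lemma coeff_eq_of_expansion_succ_eq {m : ℕ} {a b b' : Finset ℕ → ℚ}
    (h : expansion (m + 1) a = expansion m b + c (m + 1) * expansion m b')
    {U : Finset ℕ} (hU : U ⊆ Finset.Icc 1 m) : a U = b U ∧ a (insert (m + 1) U) = b' U := by
  let glued : Finset ℕ → ℚ := fun W => if m + 1 ∈ W then b' (W.erase (m + 1)) else b W
  have glued_of_subset {W : Finset ℕ} (hW : W ⊆ Finset.Icc 1 m) : glued W = b W :=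
    if_neg (succ_notMem_of_subset_Icc hW)
  have glued_insert {W : Finset ℕ} (hW : W ⊆ Finset.Icc 1 m) :
      glued (insert (m + 1) W) = b' W := by
    simp [glued, Finset.erase_insert (succ_notMem_of_subset_Icc hW)]
  have hglued : expansion (m + 1) a = expansion (m + 1) glued := by
    rw [h, expansion_succ, expansion_congr fun W hW => glued_of_subset hW,
      expansion_congr fun W hW => glued_insert hW]
  have hU' := insert_succ_subset_Icc_succ m.succ_pos hU
  exact ⟨(coeff_eq_of_expansion_eq hglued (subset_Icc_succ hU)).trans (glued_of_subset hU),
    (coeff_eq_of_expansion_eq hglued hU').trans (glued_insert hU)⟩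

lemma coeff_eq_of_expansion_succ_eq_expansion {m : ℕ} {a b : Finset ℕ → ℚ}
    (h : expansion (m + 1) a = expansion m b) {U : Finset ℕ} (hU : U ⊆ Finset.Icc 1 m) :
    a U = b U ∧ a (insert (m + 1) U) = 0 :=
  coeff_eq_of_expansion_succ_eq (b' := 0) (by simp [h]) hU

lemma coeff_eq_of_expansion_succ_eq_mul {m : ℕ} {a b : Finset ℕ → ℚ}
    (h : expansion (m + 1) a = c (m + 1) * expansion m b)
    {U : Finset ℕ} (hU : U ⊆ Finset.Icc 1 m) : a U = 0 ∧ a (insert (m + 1) U) = b U :=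
  coeff_eq_of_expansion_succ_eq (b := 0) (by simp [h]) hU

lemma expansion_succ_eq_of_mem_adjoin_c {m : ℕ} {a : Finset ℕ → ℚ}
    (ha : expansion (m + 1) a ∈ Algebra.adjoin ℚ {c m}) :
    expansion (m + 1) a = expansion m a := by
  obtain ⟨b, hb⟩ := adjoin_c_le_range_expansion m ha
  have hab {U : Finset ℕ} (hU : U ⊆ Finset.Icc 1 m) : a U = b U :=
    (coeff_eq_of_expansion_succ_eq_expansion hb.symm hU).1
  rw [← hb, expansion_congr fun U hU => hab hU]

/-- recursion for the structure constants `N_{A,B}^W` defined by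
`d_A·d_B = ∑_{W ⊆ {1,…,n}} N_{A,B}^W d_W`. -/
theorem stmt_5 (n : ℕ) (hn : 1 ≤ n)
    (N : Finset ℕ → Finset ℕ → Finset ℕ → ℚ)
    (hN : ∀ A B : Finset ℕ, A ⊆ Finset.Icc 1 n → B ⊆ Finset.Icc 1 n →
      d A * d B = ∑ W ∈ (Finset.Icc 1 n).powerset, (N A B W : ℝ) * d W)
    (S T U : Finset ℕ) (hS : S ⊆ Finset.Icc 1 (n - 1)) (hT : T ⊆ Finset.Icc 1 (n - 1))
    (hU : U ⊆ Finset.Icc 1 (n - 1)) :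
    (N S T (insert n U) = 0 ∧ N (insert n S) T U = 0 ∧ N S (insert n T) U = 0 ∧
      N (insert n S) (insert n T) (insert n U) = 0) ∧
    (N (insert n S) T (insert n U) = N S T U ∧ N S (insert n T) (insert n U) = N S T U) ∧
    (∀ hUne : U.Nonempty,
      N (insert n S) (insert n T) U =
        N S T (Finset.Icc (U.max' hUne + 1) (n - 1) ∪ U.erase (U.max' hUne)) +
          2 * ∑ k ∈ Finset.Icc (U.max' hUne) (n - 1),
                N S T (Finset.Icc (k + 1) (n - 1) ∪ U)) ∧
    (N (insert n S) (insert n T) ∅ =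
      2 * ∑ k ∈ Finset.range n, N S T (Finset.Icc (k + 1) (n - 1))) := by
  obtain ⟨m, rfl⟩ := Nat.exists_eq_add_of_le' hn
  simp only [Nat.add_sub_cancel] at hS hT hU ⊢
  simp only [← expansion_apply] at hN
  have hS' := insert_succ_subset_Icc_succ hn hS
  have hT' := insert_succ_subset_Icc_succ hn hT
  have hNST := hN S T (subset_Icc_succ hS) (subset_Icc_succ hT)
  have hlow : expansion (m + 1) (N S T) = expansion m (N S T) :=
    expansion_succ_eq_of_mem_adjoin_c (hNST ▸ mul_mem (d_mem_adjoin_c hS) (d_mem_adjoin_c hT))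
  have hST : d S * d T = expansion m (N S T) := hNST.trans hlow
  have expand_nST : expansion (m + 1) (N (insert (m + 1) S) T) =
      c (m + 1) * expansion m (N S T) := by
    rw [← hN _ T hS' (subset_Icc_succ hT), d_insert_succ hS, mul_assoc, hST]
  have expand_SnT : expansion (m + 1) (N S (insert (m + 1) T)) =
      c (m + 1) * expansion m (N S T) := by
    rw [← hN S _ (subset_Icc_succ hS) hT', d_insert_succ hT, mul_left_comm, hST]
  have expand_nSnT : expansion (m + 1) (N (insert (m + 1) S) (insert (m + 1) T)) =
      expansion m (sqMulCoeff m (N S T)) := by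
    rw [← hN _ _ hS' hT', d_insert_succ hS, d_insert_succ hT, mul_mul_mul_comm, hST, ← sq,
      expansion_sqMulCoeff]
  have coeff_nST := coeff_eq_of_expansion_succ_eq_mul expand_nST hU
  have coeff_SnT := coeff_eq_of_expansion_succ_eq_mul expand_SnT hU
  have coeff_nSnT {V : Finset ℕ} (hV : V ⊆ Finset.Icc 1 m) :=
    coeff_eq_of_expansion_succ_eq_expansion expand_nSnT hV
  exact ⟨⟨(coeff_eq_of_expansion_succ_eq_expansion hlow hU).2, coeff_nST.1, coeff_SnT.1,
      (coeff_nSnT hU).2⟩, ⟨coeff_nST.2, coeff_SnT.2⟩,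
    fun hUne => (coeff_nSnT hU).1.trans (sqMulCoeff_of_nonempty m _ hUne),
    (coeff_nSnT (Finset.empty_subset _)).1.trans (sqMulCoeff_empty m _)⟩
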